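/- Suppose the CDF G of W satisfies G(u) ~ c·u·|ln u|^{−1} as u → 0+ for some constant c > 0 (the case β = 1, γ = −1). Then there exists a constant c' > 0 such that A(t) ~ c'·t·ln ln t as t → ∞, so the convergence rate √(A(t)) ~ √(c')·√(t·ln ln t). -/

import Mathlib

open MeasureTheory ProbabilityTheory Filter Real

/-!
Near infinity `G (1 / u) ~ c / (u ln u)`, whose antiderivative is `c ln ln u`, so
`∫ u in 0..x, G (1 / u) ~ c ln ln x`. The upper limit `x = B t` is determined by
`G (1 / x) = 1 / t`, that is, by `t ~ x ln x / c`. One logarithm reduces this to `ln t ~ ln x`,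
since `ln ln x` and `ln c` are negligible against `ln x`, and a second one gives
`ln ln t ~ ln ln (B t)`. Hence `c' = c`.
-/

open Asymptotics Set Topology

section IntegralAsymptotics

variable {E : Type*} [NormedAddCommGroup E] [NormedSpace ℝ E] {F F' : ℝ → ℝ} {a : ℝ}

lemma intervalIntegrable_of_hasDerivAt_of_nonneg {b : ℝ} (hab : a ≤ b)
    (hF : ∀ x ∈ Icc a b, HasDerivAt F (F' x) x) (hF' : ∀ x ∈ Icc a b, 0 ≤ F' x) :
    IntervalIntegrable F' volume a b := by
  have h_Ioo : Ioo (min a b) (max a b) ⊆ Icc a b := by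
    rw [min_eq_left hab, max_eq_right hab]
    exact Ioo_subset_Icc_self
  exact intervalIntegral.intervalIntegrable_deriv_of_nonneg
    (fun x hx => (hF x (uIcc_of_le hab ▸ hx)).continuousAt.continuousWithinAt)
    (fun x hx => hF x (h_Ioo hx)) (fun x hx => hF' x (h_Ioo hx))

lemma isLittleO_intervalIntegral_of_hasDerivAt {f : ℝ → E}
    (hf : ∀ b ≥ a, IntervalIntegrable f volume a b)
    (hF : ∀ᶠ x in atTop, HasDerivAt F (F' x) x) (hF' : ∀ᶠ x in atTop, 0 ≤ F' x)
    (hF_top : Tendsto F atTop atTop) (h : f =o[atTop] F') :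
    (fun x => ∫ u in a..x, f u) =o[atTop] F := by
  refine isLittleO_iff.2 fun ε hε => ?_
  obtain ⟨N, haN, hN⟩ : ∃ N ≥ a, ∀ x ≥ N,
      HasDerivAt F (F' x) x ∧ 0 ≤ F' x ∧ ‖f x‖ ≤ ε / 2 * ‖F' x‖ :=
    ((eventually_ge_atTop a).and
      (eventually_forall_ge_atTop.2 (hF.and (hF'.and (h.def (half_pos hε)))))).exists
  filter_upwards [eventually_ge_atTop N, hF_top.eventually_ge_atTop 0,
    hF_top.eventually_ge_atTop ((‖∫ u in a..N, f u‖ - ε / 2 * F N) / (ε / 2))] with x hNx hFx hx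
  rw [div_le_iff₀' (half_pos hε)] at hx
  have hF'_int : IntervalIntegrable F' volume N x :=
    intervalIntegrable_of_hasDerivAt_of_nonneg hNx
      (fun y hy => (hN y hy.1).1) (fun y hy => (hN y hy.1).2.1)
  have h_tail : ‖∫ u in N..x, f u‖ ≤ ε / 2 * (F x - F N) := calc
    ‖∫ u in N..x, f u‖ ≤ ∫ u in N..x, ε / 2 * F' u :=
      intervalIntegral.norm_integral_le_of_norm_le hNx
        (.of_forall fun u hu => by
          obtain ⟨-, hu_nonneg, hu_le⟩ := hN u hu.1.le
          rwa [Real.norm_of_nonneg hu_nonneg] at hu_le)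
        (hF'_int.const_mul _)
    _ = ε / 2 * (F x - F N) := by
      rw [intervalIntegral.integral_const_mul,
        intervalIntegral.integral_eq_sub_of_hasDerivAt
          (fun y hy => (hN y (uIcc_of_le hNx ▸ hy).1).1) hF'_int]
  calc ‖∫ u in a..x, f u‖
      = ‖(∫ u in a..N, f u) + ∫ u in N..x, f u‖ := by
        rw [intervalIntegral.integral_add_adjacent_intervals (hf N haN)
          ((hf N haN).symm.trans (hf x (haN.trans hNx)))]
    _ ≤ ‖∫ u in a..N, f u‖ + ε / 2 * (F x - F N) := norm_add_le_of_le le_rfl h_tail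
    _ ≤ ε * ‖F x‖ := by
        rw [Real.norm_of_nonneg hFx]
        linarith

lemma isEquivalent_intervalIntegral_of_hasDerivAt {f : ℝ → ℝ}
    (hf : ∀ b ≥ a, IntervalIntegrable f volume a b)
    (hF : ∀ᶠ x in atTop, HasDerivAt F (F' x) x) (hF' : ∀ᶠ x in atTop, 0 ≤ F' x)
    (hF_top : Tendsto F atTop atTop) (h : f ~[atTop] F') :
    (fun x => ∫ u in a..x, f u) ~[atTop] F := by
  obtain ⟨N, haN, hN⟩ : ∃ N ≥ a, ∀ x ≥ N, HasDerivAt F (F' x) x ∧ 0 ≤ F' x :=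
    ((eventually_ge_atTop a).and (eventually_forall_ge_atTop.2 (hF.and hF'))).exists
  have hf_N : ∀ b ≥ N, IntervalIntegrable f volume N b := fun b hb =>
    (hf N haN).symm.trans (hf b (haN.trans hb))
  have hF'_N : ∀ b ≥ N, IntervalIntegrable F' volume N b := fun b hb =>
    intervalIntegrable_of_hasDerivAt_of_nonneg hb
      (fun y hy => (hN y hy.1).1) (fun y hy => (hN y hy.1).2)
  have h_tail : (fun x => ∫ u in N..x, (f - F') u) =o[atTop] F :=
    isLittleO_intervalIntegral_of_hasDerivAt (fun b hb => (hf_N b hb).sub (hF'_N b hb))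
      hF hF' hF_top h.isLittleO
  have h_const : (fun _ : ℝ => (∫ u in a..N, f u) - F N) =o[atTop] F :=
    isLittleO_const_left.2 (.inr (tendsto_norm_atTop_atTop.comp hF_top))
  refine IsLittleO.isEquivalent ((h_const.add h_tail).congr' ?_ .rfl)
  filter_upwards [eventually_ge_atTop N] with x hx
  have h_ftc : ∫ u in N..x, F' u = F x - F N :=
    intervalIntegral.integral_eq_sub_of_hasDerivAt
      (fun y hy => (hN y (uIcc_of_le hx ▸ hy).1).1) (hF'_N x hx)
  simp only [Pi.sub_apply]
  rw [intervalIntegral.integral_sub (hf_N x hx) (hF'_N x hx), h_ftc,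
    ← intervalIntegral.integral_add_adjacent_intervals (hf N haN) (hf_N x hx)]
  ring

lemma isEquivalent_intervalIntegral_of_isEquivalent_inv_mul_log {f : ℝ → ℝ} {c : ℝ} (hc : 0 < c)
    (hf : ∀ b ≥ a, IntervalIntegrable f volume a b)
    (h : f ~[atTop] fun u => c * (u * log u)⁻¹) :
    (fun x => ∫ u in a..x, f u) ~[atTop] fun x => c * log (log x) := by
  refine isEquivalent_intervalIntegral_of_hasDerivAt hf ?_ ?_ ?_ h
  · filter_upwards [eventually_gt_atTop 1] with x hx
    have h_log_log := (hasDerivAt_log (one_pos.trans hx).ne').log (log_pos hx).ne'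
    rw [div_eq_mul_inv, ← mul_inv] at h_log_log
    exact h_log_log.const_mul c
  · filter_upwards [eventually_gt_atTop 1] with x hx
    have := log_pos hx
    positivity
  · exact (tendsto_log_atTop.comp tendsto_log_atTop).const_mul_atTop hc

end IntegralAsymptotics

section IteratedLogarithm

variable {ι : Type*} {l : Filter ι} {c : ℝ}

lemma isEquivalent_log_const_mul_mul_log (hc : c ≠ 0) :
    (fun x => log (c * (x * log x))) ~[atTop] log := by
  have h_log_log : (fun x => log (log x)) =o[atTop] log :=
    isLittleO_log_id_atTop.comp_tendsto tendsto_log_atTop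
  have h_sum : (fun x => log x + (log (log x) + log c)) ~[atTop] log :=
    IsEquivalent.refl.add_isLittleO (h_log_log.add isLittleO_const_log_atTop)
  refine h_sum.congr_left ?_
  filter_upwards [eventually_gt_atTop 1] with x hx
  have hx₀ : x ≠ 0 := (one_pos.trans hx).ne'
  have hlog : log x ≠ 0 := (log_pos hx).ne'
  rw [log_mul hc (mul_ne_zero hx₀ hlog), log_mul hx₀ hlog]
  ring

lemma isEquivalent_log_log_of_isEquivalent_mul_mul_log {s x : ι → ℝ} (hc : 0 < c)
    (hx : Tendsto x l atTop) (h : s ~[l] fun i => c * (x i * log (x i))) :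
    (fun i => log (log (s i))) ~[l] fun i => log (log (x i)) := by
  have h_top : Tendsto (fun i => c * (x i * log (x i))) l atTop :=
    (hx.atTop_mul_atTop₀ (tendsto_log_atTop.comp hx)).const_mul_atTop hc
  have h_log : (fun i => log (s i)) ~[l] fun i => log (x i) :=
    (h.log h_top).trans ((isEquivalent_log_const_mul_mul_log hc.ne').comp_tendsto hx)
  exact h_log.log (tendsto_log_atTop.comp hx)

end IteratedLogarithm

section MonotoneInverse

variable {ι : Type*} {l : Filter ι} {G : ℝ → ℝ}

lemma tendsto_nhdsGT_zero_of_monotoneOn (hG : MonotoneOn G (Ioi 0)) (hG_pos : ∀ u > 0, 0 < G u)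
    {h : ι → ℝ} (h_pos : ∀ᶠ i in l, 0 < h i) (hGh : Tendsto (fun i => G (h i)) l (𝓝 0)) :
    Tendsto h l (𝓝[>] 0) := by
  refine tendsto_nhdsWithin_iff.2 ⟨tendsto_order.2 ⟨fun b hb => ?_, fun b hb => ?_⟩, h_pos⟩
  · exact h_pos.mono fun i hi => hb.trans hi
  · filter_upwards [h_pos, hGh.eventually_lt_const (hG_pos b hb)] with i hi hGi
    exact hG.reflect_lt hi hb hGi

lemma pos_of_monotoneOn_of_frequently_pos (hG : MonotoneOn G (Ioi 0))
    (hG_pos : ∃ᶠ u in 𝓝[>] 0, 0 < G u) {u : ℝ} (hu : 0 < u) : 0 < G u := by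
  obtain ⟨v, hGv, hv⟩ := (hG_pos.and_eventually (Ioo_mem_nhdsGT hu)).exists
  exact hGv.trans_le (hG hv.1 hu hv.2.le)

lemma intervalIntegrable_comp_one_div_of_monotoneOn (hG : MonotoneOn G (Ioi 0))
    (hG_nonneg : ∀ u > 0, 0 ≤ G u) (hG_bdd : BddAbove (G '' Ioi 0)) {x : ℝ} (hx : 0 ≤ x) :
    IntervalIntegrable (fun u => G (1 / u)) volume 0 x := by
  obtain ⟨M, hM⟩ := hG_bdd
  have h_anti : AntitoneOn (fun u => G (1 / u)) (Ioc 0 x) := fun u hu v hv huv =>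
    hG (one_div_pos.2 hv.1) (one_div_pos.2 hu.1) (one_div_le_one_div_of_le hu.1 huv)
  refine (intervalIntegrable_iff_integrableOn_Ioc_of_le hx).2 <|
    .of_bound measure_Ioc_lt_top
      (aemeasurable_restrict_of_antitoneOn measurableSet_Ioc h_anti).aestronglyMeasurable M ?_
  refine (ae_restrict_iff' measurableSet_Ioc).2 (.of_forall fun u hu => ?_)
  have hu' : 0 < 1 / u := one_div_pos.2 hu.1
  rw [Real.norm_of_nonneg (hG_nonneg _ hu')]
  exact hM (mem_image_of_mem G hu')

lemma eventually_pos_of_leftInvOn_of_monotoneOn {H : ℝ → ℝ} {b : ℝ} (hG : MonotoneOn G (Ici 0))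
    (hG_image : G '' Ici 0 = Ico 0 b) (hH : LeftInvOn H G (Ici 0)) :
    ∀ᶠ v in 𝓝[>] 0, 0 < H v := by
  have hb : 0 < b := nonempty_Ico.1 (hG_image ▸ nonempty_Ici.image G)
  filter_upwards [Ioo_mem_nhdsGT hb] with v hv
  obtain ⟨u, hu, rfl⟩ : v ∈ G '' Ici 0 := hG_image ▸ Ioo_subset_Ico_self hv
  obtain ⟨w, hw, hGw⟩ : (0 : ℝ) ∈ G '' Ici 0 := hG_image ▸ ⟨le_rfl, hb⟩
  rw [hH hu]
  exact (mem_Ici.1 hw).trans_lt (hG.reflect_lt hw hu (hGw ▸ hv.1))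

lemma isEquivalent_comp_of_rightInvOn {H : ℝ → ℝ} {b : ℝ} (hb : 0 < b)
    (hGH : RightInvOn H G (Ico 0 b)) : (fun v => G (H v)) ~[𝓝[>] 0] fun v => v :=
  EventuallyEq.isEquivalent <| eventually_of_mem (Ioo_mem_nhdsGT hb) fun _ hv =>
    hGH (Ioo_subset_Ico_self hv)

end MonotoneInverse

section LogarithmicCorrection

lemma tendsto_one_div_atTop_nhdsGT_zero {𝕜 : Type*} [Field 𝕜] [LinearOrder 𝕜]
    [IsStrictOrderedRing 𝕜] [TopologicalSpace 𝕜] [OrderTopology 𝕜] :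
    Tendsto (fun x : 𝕜 => 1 / x) atTop (𝓝[>] 0) := by
  simpa only [one_div] using tendsto_inv_atTop_nhdsGT_zero

variable {G : ℝ → ℝ} {c : ℝ}

lemma eventually_mul_inv_abs_log_pos (hc : 0 < c) : ∀ᶠ u in 𝓝[>] 0, 0 < c * u * |log u|⁻¹ := by
  filter_upwards [Ioo_mem_nhdsGT one_pos] with u hu
  exact mul_pos (mul_pos hc hu.1) (inv_pos.2 (abs_pos.2 (log_neg hu.1 hu.2).ne))

lemma isEquivalent_comp_one_div (h : G ~[𝓝[>] 0] fun u => c * u * |log u|⁻¹) :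
    (fun x => G (1 / x)) ~[atTop] fun x => c * (x * log x)⁻¹ := by
  refine (h.comp_tendsto tendsto_one_div_atTop_nhdsGT_zero).congr_right ?_
  filter_upwards [eventually_gt_atTop 1] with x hx
  simp only [Function.comp_apply, one_div, log_inv, abs_neg, abs_of_pos (log_pos hx), mul_inv,
    mul_assoc]

lemma isEquivalent_log_log_of_isEquivalent_one_div (hc : 0 < c)
    (h : G ~[𝓝[>] 0] fun u => c * u * |log u|⁻¹) {B : ℝ → ℝ} (hB : Tendsto B atTop atTop)
    (hGB : (fun t => G (1 / B t)) ~[atTop] fun t => 1 / t) :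
    (fun t => log (log (B t))) ~[atTop] fun t => log (log t) := by
  have h_inv : (fun t => 1 / t) ~[atTop] fun t => c * (B t * log (B t))⁻¹ :=
    hGB.symm.trans ((isEquivalent_comp_one_div h).comp_tendsto hB)
  have h_id : (fun t => t) ~[atTop] fun t => c⁻¹ * (B t * log (B t)) := by
    simpa only [Pi.inv_def, one_div, mul_inv, inv_inv] using h_inv.inv
  exact (isEquivalent_log_log_of_isEquivalent_mul_mul_log (inv_pos.2 hc) hB h_id).symm

lemma isEquivalent_intervalIntegral_comp_one_div (hc : 0 < c)
    (h : G ~[𝓝[>] 0] fun u => c * u * |log u|⁻¹)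
    (hG : ∀ x ≥ 0, IntervalIntegrable (fun u => G (1 / u)) volume 0 x)
    {B : ℝ → ℝ} (hB : Tendsto B atTop atTop)
    (hGB : (fun t => G (1 / B t)) ~[atTop] fun t => 1 / t) :
    (fun t => ∫ u in 0..B t, G (1 / u)) ~[atTop] fun t => c * log (log t) :=
  ((isEquivalent_intervalIntegral_of_isEquivalent_inv_mul_log hc hG
    (isEquivalent_comp_one_div h)).comp_tendsto hB).trans
    (IsEquivalent.refl.mul (isEquivalent_log_log_of_isEquivalent_one_div hc h hB hGB))

end LogarithmicCorrection

lemma tendsto_sqrt_div_sqrt_mul_sqrt {ι : Type*} {l : Filter ι} {f g : ι → ℝ} {c : ℝ}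
    (hc : 0 ≤ c) (hg : ∀ᶠ i in l, 0 ≤ g i) (h : Tendsto (fun i => f i / (c * g i)) l (𝓝 1)) :
    Tendsto (fun i => √(f i) / (√c * √(g i))) l (𝓝 1) := by
  refine (sqrt_one ▸ h.sqrt).congr' ?_
  filter_upwards [hg] with i hi
  rw [sqrt_div' _ (mul_nonneg hc hi), sqrt_mul hc]

theorem stmt13_general (G H B A : ℝ → ℝ) (hG : MonotoneOn G (Ioi 0))
    (hG_bdd : BddAbove (G '' Ioi 0)) (hH_pos : ∀ᶠ v in 𝓝[>] 0, 0 < H v)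
    (hGH : (fun v => G (H v)) ~[𝓝[>] 0] fun v => v)
    (hB : ∀ t, B t = 1 / H (1 / t))
    (hA : ∀ t, A t = t * ∫ u in Ioc 0 (B t), G (1 / u))
    (c : ℝ) (hc : 0 < c)
    (hasymp : Tendsto (fun u => G u / (c * u * |log u|⁻¹)) (𝓝[>] 0) (𝓝 1)) :
    Tendsto (fun t => A t / (c * t * log (log t))) atTop (𝓝 1) ∧
      Tendsto (fun t => √(A t) / (√c * √(t * log (log t)))) atTop (𝓝 1) := by
  have hG_equiv : G ~[𝓝[>] 0] fun u => c * u * |log u|⁻¹ :=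
    (isEquivalent_iff_tendsto_one
      ((eventually_mul_inv_abs_log_pos hc).mono fun _ => ne_of_gt)).2 hasymp
  have hG_pos : ∀ u > 0, 0 < G u := fun u hu => pos_of_monotoneOn_of_frequently_pos hG
    (hG_equiv.eventually_pos (eventually_mul_inv_abs_log_pos hc)).frequently hu
  have hH : Tendsto H (𝓝[>] 0) (𝓝[>] 0) := tendsto_nhdsGT_zero_of_monotoneOn hG hG_pos hH_pos
    (hGH.symm.tendsto_nhds (tendsto_id.mono_left nhdsWithin_le_nhds))
  have hB_top : Tendsto B atTop atTop := by
    simpa only [funext hB, one_div] using!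
      tendsto_inv_nhdsGT_zero.comp (hH.comp tendsto_one_div_atTop_nhdsGT_zero)
  have hGB : (fun t => G (1 / B t)) ~[atTop] fun t => 1 / t := by
    simpa only [hB, one_div_one_div] using! hGH.comp_tendsto tendsto_one_div_atTop_nhdsGT_zero
  have h_int := isEquivalent_intervalIntegral_comp_one_div hc hG_equiv
    (fun x hx => intervalIntegrable_comp_one_div_of_monotoneOn hG
      (fun u hu => (hG_pos u hu).le) hG_bdd hx) hB_top hGB
  have h_log_log_pos : ∀ᶠ t in atTop, 0 < log (log t) :=
    (tendsto_log_atTop.comp tendsto_log_atTop).eventually_gt_atTop 0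
  have hA_lim : Tendsto (fun t => A t / (c * (t * log (log t)))) atTop (𝓝 1) := by
    refine ((isEquivalent_iff_tendsto_one ?_).1 h_int).congr' ?_
    · filter_upwards [h_log_log_pos] with t ht using (mul_pos hc ht).ne'
    · filter_upwards [eventually_gt_atTop 0, hB_top.eventually_ge_atTop 0] with t ht hBt
      rw [Pi.div_apply, hA, intervalIntegral.integral_of_le hBt, mul_left_comm c,
        mul_div_mul_left _ _ ht.ne']
  refine ⟨by simpa only [mul_assoc] using hA_lim, tendsto_sqrt_div_sqrt_mul_sqrt hc.le ?_ hA_lim⟩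
  filter_upwards [eventually_ge_atTop 0, h_log_log_pos] with t ht h_log using mul_nonneg ht h_log.le

/-- Suppose the CDF `G` of `W` satisfies `G(u) ~ c·u·|ln u|⁻¹` as `u → 0+`
for some `c > 0` (the case `β = 1`, `γ = -1`).  Then there is `c' > 0` such that
`A(t) ~ c'·t·ln ln t` as `t → ∞`, so the convergence rate
`√(A(t)) ~ √(c')·√(t·ln ln t)`. -/
theorem stmt13
    {Ω : Type*} [MeasureSpace Ω] [IsProbabilityMeasure (ℙ : Measure Ω)]
    (W : Ω → ℝ) (hWmeas : Measurable W)
    (gW : ℝ → ℝ)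
    (hgW_pos : ∀ w ∈ Set.Ioi (0 : ℝ), 0 < gW w)
    (hgW_cont : ContinuousOn gW (Set.Ioi 0))
    (hgW_supp : ∀ w ≤ (0 : ℝ), gW w = 0)
    (hdens : Measure.map W ℙ = volume.withDensity (fun w => ENNReal.ofReal (gW w)))
    (G H B A : ℝ → ℝ)
    (hG : ∀ u, G u = (ℙ {ω | W ω ≤ u}).toReal)
    (hGmono : StrictMonoOn G (Set.Ici 0))
    (hGrange : G '' Set.Ici 0 = Set.Ico 0 1)
    (hH : ∀ u ≥ (0 : ℝ), H (G u) = u)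
    (hGH : ∀ v ∈ Set.Ico (0 : ℝ) 1, G (H v) = v)
    (hB : ∀ t, B t = 1 / H (1 / t))
    (hA : ∀ t, A t = t * ∫ u in Set.Ioc (0 : ℝ) (B t), G (1 / u))
    (c : ℝ) (hc : 0 < c)
    (hasymp : Tendsto (fun u => G u / (c * u * |Real.log u|⁻¹))
      (nhdsWithin 0 (Set.Ioi 0)) (nhds 1)) :
    ∃ c' > (0 : ℝ),
      Tendsto (fun t => A t / (c' * t * Real.log (Real.log t))) atTop (nhds 1) ∧
      Tendsto (fun t => Real.sqrt (A t) /
        (Real.sqrt c' * Real.sqrt (t * Real.log (Real.log t)))) atTop (nhds 1) := by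
  exact ⟨c, hc, stmt13_general G H B A (hGmono.monotoneOn.mono Ioi_subset_Ici_self)
    (bddAbove_Ico.mono (hGrange ▸ image_mono Ioi_subset_Ici_self))
    (eventually_pos_of_leftInvOn_of_monotoneOn hGmono.monotoneOn hGrange hH)
    (isEquivalent_comp_of_rightInvOn one_pos hGH) hB hA c hc hasymp⟩
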